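/- For every natural number m there exists a finite connected acyclic simple graph (a tree) T with treewidth at most 1 and pathwidth at least m; in particular, the difference pw(T) − tw(T) can be made arbitrarily large over trees. -/

import Mathlib

open SimpleGraph

/-- `bag` is a tree decomposition of the graph `G`, modeled on the graph `T`:
(1) every vertex of `G` lies in some bag, (2) both endpoints of every edge of `G`
lie in a common bag, and (3) for every vertex `v` of `G`, the set of nodes whose
bag contains `v` induces a connected (in particular, nonempty) subgraph of `T`. -/
def IsTreeDecomposition {V ι : Type*} (G : SimpleGraph V) (T : SimpleGraph ι)
    (bag : ι → Finset V) : Prop :=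
  (∀ v : V, ∃ i, v ∈ bag i) ∧
  (∀ u v : V, G.Adj u v → ∃ i, u ∈ bag i ∧ v ∈ bag i) ∧
  (∀ v : V, (T.induce {i | v ∈ bag i}).Connected)

/-- The width of a decomposition: the maximal bag size minus one. -/
def decompWidth {ι V : Type*} [Fintype ι] (bag : ι → Finset V) : ℕ :=
  (Finset.univ.sup fun i => (bag i).card) - 1

/-- `G` admits a tree decomposition (modeled on a tree) of width at most `k`. -/
def HasTreeDecompWidthLE {V : Type*} (G : SimpleGraph V) (k : ℕ) : Prop :=
  ∃ (n : ℕ) (T : SimpleGraph (Fin n)) (bag : Fin n → Finset V),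
    T.IsTree ∧ IsTreeDecomposition G T bag ∧ decompWidth bag ≤ k

/-- `G` admits a path decomposition (a tree decomposition modeled on a path graph)
of width at most `k`. -/
def HasPathDecompWidthLE {V : Type*} (G : SimpleGraph V) (k : ℕ) : Prop :=
  ∃ (n : ℕ) (bag : Fin n → Finset V),
    IsTreeDecomposition G (pathGraph n) bag ∧ decompWidth bag ≤ k

/-- The treewidth of `G`: the minimum width of a tree decomposition of `G`. -/
noncomputable def treewidth {V : Type*} (G : SimpleGraph V) : ℕ :=
  sInf {k | HasTreeDecompWidthLE G k}

/-- The pathwidth of `G`: the minimum width of a path decomposition of `G`. -/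
noncomputable def pathwidth {V : Type*} (G : SimpleGraph V) : ℕ :=
  sInf {k | HasPathDecompWidthLE G k}

/-!
Trees have treewidth at most `1`: orient every edge towards a root and use the bags
`{v, parent v}`, indexed by the tree itself.

The perfect ternary tree of height `h` has pathwidth at least `h`. In a path decomposition, the
positions whose bag meets a given connected set of vertices form an interval. By induction on the
height, each of the three subtrees below the root has a bag containing many of its vertices. Of the
three positions found this way, one lies between the other two. Deleting the subtree it belongs to
leaves a connected set that meets the bags on both sides, hence also the middle bag, which therefore
contains a further vertex.
-/

section Graph

variable {V β : Type*} {G : SimpleGraph V}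

theorem connected_of_exists_adj_lt [LT β] [WellFoundedLT β] (rank : V → β) (r : V)
    (h : ∀ v, v ≠ r → ∃ w, G.Adj v w ∧ rank w < rank v) : G.Connected := by
  refine connected_iff_exists_forall_reachable G |>.2 ⟨r, fun v => ?_⟩
  induction v using (InvImage.wf rank wellFounded_lt).induction with
  | _ v ih =>
    by_cases hv : v = r
    · rw [hv]
    · obtain ⟨w, hvw, hlt⟩ := h v hv
      exact (ih w hlt).trans hvw.symm.reachable

theorem isAcyclic_of_subsingleton_adj_lt [LinearOrder β] (rank : V → β)
    (hne : ∀ v w, G.Adj v w → rank v ≠ rank w)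
    (hsub : ∀ v, {w | G.Adj v w ∧ rank w < rank v}.Subsingleton) : G.IsAcyclic := by
  classical
  intro u c hc
  obtain ⟨v, hv, hmax⟩ := c.support.toFinset.exists_max_image rank ⟨u, by simp⟩
  rw [List.mem_toFinset] at hv
  have hlower : ∀ w ∈ (c.rotate v hv).support, G.Adj v w → rank w < rank v := fun w hw hvw =>
    (hmax w (by simpa using hw)).lt_of_ne (hne v w hvw).symm
  have hrot := hc.rotate hv
  have hsnd := Walk.adj_snd hrot.not_nil
  have hpen := (Walk.adj_penultimate hrot.not_nil).symm
  exact hrot.snd_ne_penultimate <| hsub v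
    ⟨hsnd, hlower _ (Walk.getVert_mem_support _ _) hsnd⟩
    ⟨hpen, hlower _ (Walk.getVert_mem_support _ _) hpen⟩

theorem exists_parent_of_isTree (hG : G.IsTree) :
    ∃ parent : V → V, (∀ v, parent v = v ∨ G.Adj v (parent v)) ∧
      ∀ u v, G.Adj u v → parent u = v ∨ parent v = u := by
  obtain ⟨r⟩ := hG.connected.nonempty
  choose path hpath huniq using fun v => hG.existsUnique_path v r
  refine ⟨fun v => (path v).snd, fun v => ?_, fun u v huv => ?_⟩
  · beta_reduce
    cases path v with
    | nil => exact Or.inl rfl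
    | cons hadj p => exact Or.inr (by simpa using hadj)
  · by_cases hv : v ∈ (path u).support
    · exact Or.inl (hG.isAcyclic.eq_snd_of_adj_start (hpath u) huv hv).symm
    · have hcons : Walk.cons huv.symm (path u) = path v := huniq v _ ((hpath u).cons hv)
      exact Or.inr (by simp [← hcons])

theorem ordConnected_of_preconnected_induce_hasse {α : Type*} [LinearOrder α] {s : Set α}
    (hs : ((hasse α).induce s).Preconnected) : s.OrdConnected := by
  refine ⟨fun i hi k hk j hj => by_contra fun hjs => ?_⟩
  obtain ⟨p⟩ := hs ⟨i, hi⟩ ⟨k, hk⟩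
  have hij : i < j := hj.1.lt_of_ne fun h => hjs (h ▸ hi)
  obtain ⟨⟨⟨x, y⟩, hxy⟩, -, hxj, hyj⟩ :=
    p.exists_boundary_dart {x | x.1 < j} hij (not_lt.2 hj.2)
  have hjy : j < y.1 := (not_lt.1 hyj).lt_of_ne fun h => hjs (h ▸ y.2)
  rcases hasse_adj.1 hxy with h | h
  · exact h.2 hxj hjy
  · exact lt_asymm h.1 (hxj.trans hjy)

end Graph

section Decomposition

variable {V W ι κ : Type*} {G : SimpleGraph V} {H : SimpleGraph W} {T : SimpleGraph ι}
  {bag : ι → Finset V}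

theorem decompWidth_le_iff [Fintype ι] {k : ℕ} :
    decompWidth bag ≤ k ↔ ∀ i, (bag i).card ≤ k + 1 := by
  simp [decompWidth]

theorem IsTreeDecomposition.comap {bag : ι → Finset W} (h : IsTreeDecomposition H T bag)
    {f : G →g H} (hf : Function.Injective f) :
    IsTreeDecomposition G T fun i => (bag i).preimage f hf.injOn := by
  refine ⟨fun v => ?_, fun u v huv => ?_, fun v => ?_⟩
  · simpa only [Finset.mem_preimage] using h.1 (f v)
  · simpa only [Finset.mem_preimage] using h.2.1 _ _ (f.map_adj huv)
  · have hnodes : {i | v ∈ (bag i).preimage f hf.injOn} = {i | f v ∈ bag i} := by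
      simp only [Finset.mem_preimage]
    exact hnodes ▸ h.2.2 (f v)

theorem IsTreeDecomposition.comap_index {T' : SimpleGraph κ} (h : IsTreeDecomposition G T bag)
    (e : T' ≃g T) : IsTreeDecomposition G T' (bag ∘ e) := by
  refine ⟨fun v => ?_, fun u v huv => ?_, fun v => ?_⟩
  · exact e.surjective.exists.1 (h.1 v)
  · exact e.surjective.exists.1 (h.2.1 u v huv)
  · exact (e.induce (e.toEquiv.bijOn fun _ => Iff.rfl)).connected_iff.2 (h.2.2 v)

theorem IsTreeDecomposition.preconnected_induce_setOf_inter_bag (h : IsTreeDecomposition G T bag)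
    {s : Set V} (hs : (G.induce s).Preconnected) :
    (T.induce {i | (s ∩ bag i).Nonempty}).Preconnected := by
  have hsingle : ∀ (v : s) {i j} (hi : v.1 ∈ bag i) (hj : v.1 ∈ bag j),
      (T.induce {i | (s ∩ bag i).Nonempty}).Reachable ⟨i, v, v.2, hi⟩ ⟨j, v, v.2, hj⟩ := by
    intro v i j hi hj
    have hsub : {k | v.1 ∈ bag k} ⊆ {k | (s ∩ bag k).Nonempty} := fun k hk => ⟨v, v.2, hk⟩
    exact ((h.2.2 v).preconnected ⟨i, hi⟩ ⟨j, hj⟩).map (induceHomOfLE T hsub).toHom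
  have hwalk : ∀ {u w : s}, (G.induce s).Walk u w → ∀ {i j} (hi : u.1 ∈ bag i) (hj : w.1 ∈ bag j),
      (T.induce {i | (s ∩ bag i).Nonempty}).Reachable ⟨i, u, u.2, hi⟩ ⟨j, w, w.2, hj⟩ := by
    intro u w p
    induction p with
    | nil => exact hsingle _
    | cons hadj _ ih =>
      intro i j hi hj
      obtain ⟨k, hku, hkv⟩ := h.2.1 _ _ hadj
      exact (hsingle _ hi hku).trans (ih hkv hj)
  rintro ⟨i, u, hu, hi⟩ ⟨j, w, hw, hj⟩
  exact hwalk (hs ⟨u, hu⟩ ⟨w, hw⟩).some hi hj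

theorem IsTreeDecomposition.ordConnected_setOf_inter_bag [LinearOrder ι]
    (h : IsTreeDecomposition G (hasse ι) bag) {s : Set V} (hs : (G.induce s).Preconnected) :
    {i | (s ∩ bag i).Nonempty}.OrdConnected :=
  ordConnected_of_preconnected_induce_hasse (h.preconnected_induce_setOf_inter_bag hs)

theorem isTreeDecomposition_pair_parent [DecidableEq V] {parent : V → V}
    (hself : ∀ v, parent v = v ∨ G.Adj v (parent v))
    (hadj : ∀ u v, G.Adj u v → parent u = v ∨ parent v = u) :
    IsTreeDecomposition G G fun v => {v, parent v} := by
  refine ⟨fun v => ⟨v, by simp⟩, fun u v huv => ?_, fun v => ?_⟩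
  · rcases hadj u v huv with rfl | rfl
    · exact ⟨u, by simp⟩
    · exact ⟨v, by simp⟩
  · refine connected_iff_exists_forall_reachable _ |>.2 ⟨⟨v, by simp⟩, fun ⟨w, hw⟩ => ?_⟩
    have hw' : v = w ∨ v = parent w := by simpa using hw
    rcases hw' with rfl | rfl
    · rfl
    · rcases hself w with heq | hadj
      · simp only [heq, Reachable.refl]
      · exact Adj.reachable hadj.symm

theorem treewidth_le_of_isTreeDecomposition [Finite ι] (hT : T.IsTree)
    (h : IsTreeDecomposition G T bag) {k : ℕ} (hk : ∀ i, (bag i).card ≤ k + 1) :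
    treewidth G ≤ k := by
  have := Fintype.ofFinite ι
  have e := (T.overFinIso rfl).symm
  exact Nat.sInf_le
    ⟨_, _, _, e.isTree_iff.2 hT, h.comap_index e, decompWidth_le_iff.2 fun i => hk (e i)⟩

theorem treewidth_le_one_of_isTree [Finite V] (hG : G.IsTree) : treewidth G ≤ 1 := by
  classical
  obtain ⟨parent, hself, hadj⟩ := exists_parent_of_isTree hG
  exact treewidth_le_of_isTreeDecomposition hG (isTreeDecomposition_pair_parent hself hadj)
    fun _ => Finset.card_le_two

theorem hasPathDecompWidthLE_pathwidth [Finite V] (G : SimpleGraph V) :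
    HasPathDecompWidthLE G (pathwidth G) := by
  have := Fintype.ofFinite V
  refine Nat.sInf_mem (s := {k | HasPathDecompWidthLE G k})
    ⟨_, 1, fun _ => Finset.univ, ⟨by simp, by simp, fun v => ?_⟩, le_rfl⟩
  have : Nonempty {_i : Fin 1 | v ∈ (Finset.univ : Finset V)} := ⟨0, Finset.mem_univ v⟩
  exact ⟨Preconnected.of_subsingleton⟩

theorem pathwidth_le_of_isContained [Finite W] (h : G ⊑ H) : pathwidth G ≤ pathwidth H := by
  obtain ⟨f⟩ := h
  obtain ⟨n, bag, hbag, hwidth⟩ := hasPathDecompWidthLE_pathwidth H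
  refine Nat.sInf_le ⟨n, _, hbag.comap f.injective, decompWidth_le_iff.2 fun i => ?_⟩
  classical
  rw [Finset.card_preimage]
  exact (Finset.card_filter_le _ _).trans (decompWidth_le_iff.1 hwidth i)

theorem exists_le_le_of_three_le_card {β : Type*} [LinearOrder β] (hκ : 3 ≤ Nat.card κ)
    (g : κ → β) : ∃ a b c, a ≠ b ∧ c ≠ b ∧ g a ≤ g b ∧ g b ≤ g c := by
  have : Finite κ := Nat.finite_of_card_ne_zero (by omega)
  have := Fintype.ofFinite κ
  obtain ⟨e⟩ : Nonempty (Fin 3 ↪ κ) :=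
    Function.Embedding.nonempty_of_card_le (by simpa [Nat.card_eq_fintype_card] using hκ)
  let σ := Tuple.sort (g ∘ e)
  have hmono : Monotone (g ∘ e ∘ σ) := Tuple.monotone_sort (g ∘ e)
  exact ⟨e (σ 0), e (σ 1), e (σ 2), by simp, by simp, hmono (by decide), hmono (by decide)⟩

theorem IsTreeDecomposition.exists_lt_ncard_inter_bag [LinearOrder ι]
    (h : IsTreeDecomposition G (hasse ι) bag) (hκ : 3 ≤ Nat.card κ) {s : Set V} {t : κ → Set V}
    (hts : ∀ a, t a ⊆ s) (hdisj : Pairwise fun a b => Disjoint (t a) (t b))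
    (hconn : ∀ a, (G.induce (s \ t a)).Preconnected) {d : ℕ}
    (hd : ∀ a, ∃ i, d < (t a ∩ bag i).ncard) : ∃ i, d + 1 < (s ∩ bag i).ncard := by
  choose pos hpos using hd
  obtain ⟨a, b, c, hab, hcb, hle_b, hb_le⟩ := exists_le_le_of_three_le_card hκ pos
  have hmeets : ∀ a', a' ≠ b → ((s \ t b) ∩ bag (pos a')).Nonempty := fun a' hne =>
    (Set.nonempty_of_ncard_ne_zero (Nat.ne_zero_of_lt (hpos a'))).mono <|
      Set.inter_subset_inter_left _ (Set.subset_sdiff.2 ⟨hts a', hdisj hne⟩)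
  obtain ⟨v, ⟨hvs, hvt⟩, hv⟩ : ((s \ t b) ∩ bag (pos b)).Nonempty :=
    (h.ordConnected_setOf_inter_bag (hconn b)).out (hmeets a hab) (hmeets c hcb) ⟨hle_b, hb_le⟩
  refine ⟨pos b, (Nat.succ_lt_succ (hpos b)).trans_le (Set.ncard_lt_ncard ?_ ?_)⟩
  · exact (Set.ssubset_iff_of_subset (Set.inter_subset_inter_left _ (hts b))).2
      ⟨v, ⟨hvs, hv⟩, fun hvt' => hvt hvt'.1⟩
  · exact (bag (pos b)).finite_toSet.inter_of_right s

end Decomposition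

/-- The perfect tree of height `h` in which every inner vertex has one child for each element of
`α`. A vertex is encoded by the list of edge labels on the way up to the root `[]`, so the children
of `l` are the lists `a :: l` and the descendants of `l` are the lists with suffix `l`. -/
def perfectTree (α : Type*) (h : ℕ) : SimpleGraph {l : List α // l.length ≤ h} where
  Adj u v := (∃ a, v.1 = a :: u.1) ∨ ∃ a, u.1 = a :: v.1
  symm := ⟨fun _ _ => Or.symm⟩
  loopless := ⟨fun v hv => by simp at hv⟩

namespace perfectTree

variable {α : Type*} {h : ℕ}

theorem connected_induce_of_isSuffix {s : Set {l : List α // l.length ≤ h}} (r : s)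
    (hr : ∀ v ∈ s, r.1.1 <:+ v.1) (hs : ∀ v ∈ s, ∀ u, r.1.1 <:+ u.1 → u.1 <:+ v.1 → u ∈ s) :
    ((perfectTree α h).induce s).Connected := by
  refine connected_of_exists_adj_lt (fun v => v.1.1.length) r ?_
  rintro ⟨⟨_ | ⟨a, l⟩, hl⟩, hv⟩ hne
  · exact absurd (Subtype.ext <| Subtype.ext (List.suffix_nil.1 (hr _ hv)).symm) hne
  · rcases List.suffix_cons_iff.1 (hr _ hv) with heq | hrl
    · exact absurd (Subtype.ext <| Subtype.ext heq.symm) hne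
    · have hl' : l.length ≤ h := (Nat.le_succ _).trans hl
      exact ⟨⟨⟨l, hl'⟩, hs _ hv _ hrl (List.suffix_cons a l)⟩, Or.inr ⟨a, rfl⟩, by simp⟩

theorem isTree (α : Type*) (h : ℕ) : (perfectTree α h).IsTree where
  connected := (induceUnivIso _).connected_iff.1 <| connected_induce_of_isSuffix
    ⟨⟨[], Nat.zero_le h⟩, trivial⟩ (fun _ _ => List.nil_suffix) fun _ _ _ _ _ => trivial
  isAcyclic := by
    have hne : ∀ v w, (perfectTree α h).Adj v w → v.1.length ≠ w.1.length := by
      rintro v w (⟨a, ha⟩ | ⟨a, ha⟩) <;> simp [ha]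
    have htail : ∀ v w, (perfectTree α h).Adj v w → w.1.length < v.1.length →
        w.1 = v.1.tail := by
      rintro v w (⟨a, ha⟩ | ⟨a, ha⟩) hlt
      · simp [ha] at hlt
      · simp [ha]
    exact isAcyclic_of_subsingleton_adj_lt (fun v => v.1.length) hne fun v u hu w hw =>
      Subtype.ext ((htail v u hu.1 hu.2).trans (htail v w hw.1 hw.2).symm)

/-- The vertices of the subtree below the vertex `l`, including `l`. -/
def descendants (h : ℕ) (l : List α) : Set {l : List α // l.length ≤ h} :=
  {v | l <:+ v.1}

theorem descendants_cons_subset (a : α) (l : List α) :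
    descendants h (a :: l) ⊆ descendants h l :=
  fun _ hv => (List.suffix_cons a l).trans hv

theorem pairwise_disjoint_descendants_cons (l : List α) :
    Pairwise fun a b => Disjoint (descendants h (a :: l)) (descendants h (b :: l)) := by
  refine fun a b hab => Set.disjoint_left.2 fun v ha hb => hab ?_
  have heq := (List.suffix_of_suffix_length_le ha hb (by simp)).eq_of_length (by simp)
  exact List.head_eq_of_cons_eq heq

theorem connected_induce_descendants_diff {l : List α} (hl : l.length ≤ h) (a : α) :
    ((perfectTree α h).induce (descendants h l \ descendants h (a :: l))).Connected :=
  connected_induce_of_isSuffix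
    ⟨⟨l, hl⟩, List.suffix_rfl, fun hsuff => by simpa using List.IsSuffix.length_le hsuff⟩
    (fun _ hv => hv.1) fun _ hv _ hlu huv => ⟨hlu, fun hau => hv.2 (hau.trans huv)⟩

theorem exists_lt_ncard_descendants_inter_bag (hα : 3 ≤ Nat.card α) {ι : Type*} [LinearOrder ι]
    {bag : ι → Finset {l : List α // l.length ≤ h}}
    (hbag : IsTreeDecomposition (perfectTree α h) (hasse ι) bag) (d : ℕ) (l : List α)
    (hl : l.length + d ≤ h) : ∃ i, d < (descendants h l ∩ bag i).ncard := by
  induction d generalizing l with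
  | zero =>
    obtain ⟨i, hi⟩ := hbag.1 ⟨l, hl⟩
    refine ⟨i, Set.ncard_pos ((bag i).finite_toSet.inter_of_right _) |>.2 ?_⟩
    exact ⟨⟨l, hl⟩, List.suffix_rfl, hi⟩
  | succ d ih =>
    exact hbag.exists_lt_ncard_inter_bag hα (fun a => descendants_cons_subset a l)
      (pairwise_disjoint_descendants_cons l)
      (fun a => (connected_induce_descendants_diff (by omega) a).preconnected)
      fun a => ih (a :: l) (by rw [List.length_cons]; omega)

end perfectTree

theorem le_pathwidth_perfectTree {α : Type*} (hα : 3 ≤ Nat.card α) (h : ℕ) :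
    h ≤ pathwidth (perfectTree α h) := by
  have : Finite α := Nat.finite_of_card_ne_zero (by omega)
  have : Finite {l : List α // l.length ≤ h} := List.finite_length_le α h
  obtain ⟨n, bag, hbag, hwidth⟩ := hasPathDecompWidthLE_pathwidth (perfectTree α h)
  obtain ⟨i, hi⟩ :=
    perfectTree.exists_lt_ncard_descendants_inter_bag hα hbag h [] (Nat.zero_add h).le
  have hle := Set.ncard_le_ncard (Set.inter_subset_right (s := perfectTree.descendants h []))
    (bag i).finite_toSet
  rw [Set.ncard_coe_finset] at hle
  exact Nat.lt_succ_iff.1 ((hi.trans_le hle).trans_le (decompWidth_le_iff.1 hwidth i))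

/-- For every natural number `m` there is a finite tree (a connected acyclic
simple graph) whose treewidth is at most `1` and whose pathwidth is at least `m`;
in particular the difference `pathwidth - treewidth` is arbitrarily large over trees. -/
theorem exists_tree_treewidth_le_one_pathwidth_ge (m : ℕ) :
    ∃ (n : ℕ) (T : SimpleGraph (Fin n)), T.Connected ∧ T.IsAcyclic ∧
      treewidth T ≤ 1 ∧ m ≤ pathwidth T ∧ m ≤ pathwidth T - treewidth T := by
  have : Finite {l : List (Fin 3) // l.length ≤ m + 1} := List.finite_length_le _ _
  have := Fintype.ofFinite {l : List (Fin 3) // l.length ≤ m + 1}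
  let e := (perfectTree (Fin 3) (m + 1)).overFinIso rfl
  have htree := e.isTree_iff.1 (perfectTree.isTree (Fin 3) (m + 1))
  have htw := treewidth_le_one_of_isTree htree
  have hpw := (le_pathwidth_perfectTree (by simp) (m + 1)).trans
    (pathwidth_le_of_isContained e.isContained)
  exact ⟨_, _, htree.connected, htree.isAcyclic, htw, by omega, by omega⟩
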